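/- There exists a constant K > 0 such that the following holds for the maximin voting rule. Let V be an n-vote election over m candidates whose margin of victory is at least εn, with winner w, and let δ ∈ (0,1). If ℓ ≥ K·ln(m/δ)/ε² and we draw ℓ votes i.i.d. uniformly at random (with replacement) from V, then with probability at least 1 − δ: the empirical pairwise margins D̂(x,y) (computed from the sample and scaled by n/ℓ) satisfy |D̂(x,y) − D(x,y)| ≤ εn/2 for all pairs of distinct candidates x, y, and consequently the candidate maximizing the empirical maximin score min_{y ≠ x} D̂(x,y) equals w. -/

import Mathlib

/-- Pairwise margin D(x,y): number of votes preferring x to y minus the number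
preferring y to x. A vote is a permutation of `Fin m` (candidate `c` is ranked at
position `v c`, position `0` being the top, so `v x < v y` means x is preferred). -/
noncomputable def pairMargin {m n : ℕ} (V : Fin n → Equiv.Perm (Fin m))
    (x y : Fin m) : ℝ :=
  (Nat.card {i : Fin n // (V i) x < (V i) y} : ℝ)
    - (Nat.card {i : Fin n // (V i) y < (V i) x} : ℝ)

/-- Maximin score of a candidate x: min over y ≠ x of D(x,y). -/
noncomputable def maximinScore {m n : ℕ} (V : Fin n → Equiv.Perm (Fin m))
    (x : Fin m) : ℝ :=
  ⨅ y : {y : Fin m // y ≠ x}, pairMargin V x (y : Fin m)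

/-- Signed preference of a vote. -/
noncomputable def sg {m : ℕ} (v : Equiv.Perm (Fin m)) (x y : Fin m) : ℝ :=
  (if v x < v y then 1 else 0) - (if v y < v x then 1 else 0)

lemma pairMargin_eq_sum {m n : ℕ} (V : Fin n → Equiv.Perm (Fin m)) (x y : Fin m) :
    pairMargin V x y = ∑ i, sg (V i) x y := by
  unfold pairMargin sg
  rw [Finset.sum_sub_distrib, Finset.sum_boole, Finset.sum_boole, Nat.card_eq_fintype_card,
    Nat.card_eq_fintype_card, Fintype.card_subtype, Fintype.card_subtype]

lemma sg_le_one {m : ℕ} (v : Equiv.Perm (Fin m)) (x y : Fin m) : sg v x y ≤ 1 := by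
  unfold sg; split_ifs <;> norm_num

lemma neg_one_le_sg {m : ℕ} (v : Equiv.Perm (Fin m)) (x y : Fin m) : -1 ≤ sg v x y := by
  unfold sg; split_ifs <;> norm_num

lemma sg_of_lt {m : ℕ} (v : Equiv.Perm (Fin m)) (x y : Fin m) (h : v x < v y) :
    sg v x y = 1 := by
  unfold sg; rw [if_pos h, if_neg (not_lt.mpr h.le)]; norm_num

lemma sg_of_gt {m : ℕ} (v : Equiv.Perm (Fin m)) (x y : Fin m) (h : v y < v x) :
    sg v x y = -1 := by
  unfold sg; rw [if_pos h, if_neg (not_lt.mpr h.le)]; norm_num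

lemma pairMargin_swap {m n : ℕ} (V : Fin n → Equiv.Perm (Fin m)) (x y : Fin m) :
    pairMargin V x y = - pairMargin V y x := by
  unfold pairMargin; ring

lemma pairMargin_eq_two {m n : ℕ} (V : Fin n → Equiv.Perm (Fin m)) (x y : Fin m) (h : x ≠ y) :
    pairMargin V x y = 2 * ((Finset.univ.filter (fun i => V i x < V i y)).card : ℝ) - n := by
  have h1 : ∀ i, sg (V i) x y = 2 * (if V i x < V i y then 1 else 0) - 1 := by
    intro i
    rcases lt_or_gt_of_ne (fun e => h ((V i).injective e)) with h2 | h2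
    · rw [sg_of_lt _ _ _ h2, if_pos h2]; norm_num
    · rw [sg_of_gt _ _ _ h2, if_neg (not_lt.mpr h2.le)]; norm_num
  rw [pairMargin_eq_sum, Finset.sum_congr rfl (fun i _ => h1 i), Finset.sum_sub_distrib,
    ← Finset.mul_sum, Finset.sum_boole]
  simp

lemma score_attained {m n : ℕ} (V : Fin n → Equiv.Perm (Fin m)) (x z : Fin m) (h : z ≠ x) :
    ∃ y, y ≠ x ∧ maximinScore V x = pairMargin V x y := by
  haveI : Nonempty {y : Fin m // y ≠ x} := ⟨⟨z, h⟩⟩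
  obtain ⟨y, hy⟩ := exists_eq_ciInf_of_finite
    (f := fun y : {y : Fin m // y ≠ x} => pairMargin V x (y : Fin m))
  exact ⟨y, y.2, hy.symm⟩

lemma score_le {m n : ℕ} (V : Fin n → Equiv.Perm (Fin m)) (x y : Fin m) (h : y ≠ x) :
    maximinScore V x ≤ pairMargin V x y :=
  ciInf_le (Set.finite_range
    (fun y : {y : Fin m // y ≠ x} => pairMargin V x (y : Fin m))).bddBelow ⟨y, h⟩

lemma exists_top_bottom {m : ℕ} (x w : Fin m) (h : x ≠ w) :
    ∃ P : Equiv.Perm (Fin m), (∀ z, z ≠ x → P x < P z) ∧ (∀ z, z ≠ w → P z < P w) := by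
  have hm : 2 ≤ m := by
    have := x.2; have := w.2
    have : x.val ≠ w.val := fun e => h (Fin.ext e)
    omega
  let a : Fin m := ⟨0, by omega⟩
  let b : Fin m := ⟨m - 1, by omega⟩
  have hab : a ≠ b := by
    intro e; have := congrArg Fin.val e; simp [a, b] at this; omega
  let P : Equiv.Perm (Fin m) := (Equiv.swap x a).trans (Equiv.swap (Equiv.swap x a w) b)
  have hc : Equiv.swap x a w ≠ a := by
    intro e
    apply h
    have : Equiv.swap x a w = Equiv.swap x a x := by rw [e, Equiv.swap_apply_left]
    exact ((Equiv.swap x a).injective this).symm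
  have hx : P x = a := by
    simp only [P, Equiv.trans_apply, Equiv.swap_apply_left]
    exact Equiv.swap_apply_of_ne_of_ne hc.symm hab
  have hw : P w = b := by
    simp only [P, Equiv.trans_apply, Equiv.swap_apply_left]
  refine ⟨P, fun z hz => ?_, fun z hz => ?_⟩
  · have h1 : P z ≠ P x := fun e => hz (P.injective e)
    rw [hx] at h1 ⊢
    refine lt_of_le_of_ne ?_ h1.symm
    exact Fin.mk_le_of_le_val (Nat.zero_le _)
  · have h1 : P z ≠ P w := fun e => hz (P.injective e)
    rw [hw] at h1 ⊢
    refine lt_of_le_of_ne ?_ h1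
    have := (P z).2
    rw [Fin.le_def]
    change (P z).val ≤ m - 1
    omega

lemma gap {m n : ℕ} (ε : ℝ) (V : Fin n → Equiv.Perm (Fin m)) (w : Fin m)
    (hw : ∀ x : Fin m, x ≠ w → maximinScore V x < maximinScore V w)
    (hM : ∀ V' : Fin n → Equiv.Perm (Fin m),
          (∃ x : Fin m, x ≠ w ∧ maximinScore V' w ≤ maximinScore V' x) →
          ε * n ≤ (Nat.card {i : Fin n // V' i ≠ V i} : ℝ)) (x : Fin m) (hx : x ≠ w) :
    maximinScore V x + 2 * (ε * n) ≤ maximinScore V w := by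
  classical
  obtain ⟨y, hy, hwy⟩ := score_attained V w x hx
  obtain ⟨z, hz, hxz⟩ := score_attained V x w hx.symm
  have hlt := hw x hx
  have e1 := pairMargin_eq_two V w y hy.symm
  have e2 := pairMargin_eq_two V x z hz.symm
  set A := Finset.univ.filter (fun i => V i w < V i y) with hA
  set B := Finset.univ.filter (fun i => V i x < V i z) with hB
  have hBA : B.card < A.card := by
    have : (B.card : ℝ) < A.card := by linarith
    exact_mod_cast this
  obtain ⟨T, hTA, hTc⟩ := Finset.exists_subset_card_eq (s := A) (n := A.card - B.card)
    (Nat.sub_le _ _)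
  have hTc' : (T.card : ℝ) = A.card - B.card := by
    rw [hTc, Nat.cast_sub hBA.le]
  obtain ⟨P, hP1, hP2⟩ := exists_top_bottom x w hx
  have key := hM (fun i => if i ∈ T then P else V i) ⟨x, hx, ?_⟩
  · have : (Nat.card {i : Fin n // (if i ∈ T then P else V i) ≠ V i} : ℝ) ≤ T.card := by
      rw [Nat.card_eq_fintype_card, Fintype.card_subtype]
      norm_cast
      apply Finset.card_le_card
      intro i hi
      by_contra hc
      simp [hc] at hi
    linarith
  · set V' : Fin n → Equiv.Perm (Fin m) := fun i => if i ∈ T then P else V i with hV'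
    have s1 : maximinScore V' w ≤ pairMargin V w y - 2 * T.card := by
      refine (score_le V' w y hy).trans (le_of_eq ?_)
      rw [pairMargin_eq_sum, pairMargin_eq_sum]
      have : ∀ i, sg (V' i) w y = sg (V i) w y - 2 * (if i ∈ T then 1 else 0) := by
        intro i
        by_cases hi : i ∈ T
        · have hA' : V i w < V i y := by
            have := hTA hi
            simpa [hA] using this
          simp only [hV', hi, if_true]
          rw [sg_of_lt _ _ _ hA', sg_of_gt _ _ _ (hP2 y hy)]; norm_num
        · simp [hV', hi]
      rw [Finset.sum_congr rfl (fun i _ => this i), Finset.sum_sub_distrib, ← Finset.mul_sum,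
        Finset.sum_boole]
      simp
    have s2 : maximinScore V x ≤ maximinScore V' x := by
      obtain ⟨u, hu, hxu⟩ := score_attained V' x w hx.symm
      rw [hxu]
      refine (score_le V x u hu).trans ?_
      rw [pairMargin_eq_sum, pairMargin_eq_sum]
      refine Finset.sum_le_sum (fun i _ => ?_)
      by_cases hi : i ∈ T
      · simp only [hV', hi, if_true]
        rw [sg_of_lt P _ _ (hP1 u hu)]
        exact sg_le_one _ _ _
      · simp [hV', hi]
    linarith

lemma chernoff {n : ℕ} (ℓ : ℕ) (g : Fin n → ℝ) (ε : ℝ) (h0 : 0 < ε) (h1 : ε < 1)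
    (hg : ∀ i, |g i| ≤ 2) (hs : ∑ i, g i = 0) :
    ((Finset.univ.filter (fun s : Fin ℓ → Fin n => ℓ * (ε / 2) < ∑ j, g (s j))).card : ℝ)
      ≤ n ^ ℓ * Real.exp (-(ℓ * ε ^ 2 / 64)) := by
  have hmgf : ∑ i, Real.exp (ε / 16 * g i) ≤ n * Real.exp (ε ^ 2 / 64) := by
    have : ∀ i, Real.exp (ε / 16 * g i) ≤ Real.exp (ε ^ 2 / 64) + ε / 16 * g i := by
      intro i
      have hgi := abs_le.mp (hg i)
      have ha : |ε / 16 * g i| ≤ 1 := by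
        rw [abs_mul, abs_of_pos (by positivity)]
        nlinarith [hg i, abs_nonneg (g i)]
      have hb := (abs_le.mp (Real.abs_exp_sub_one_sub_id_le ha)).2
      have hc := Real.add_one_le_exp (ε ^ 2 / 64)
      have hd : (g i) ^ 2 ≤ 4 := by nlinarith
      have he : (ε / 16 * g i) ^ 2 ≤ ε ^ 2 / 64 := by
        rw [mul_pow]; nlinarith [sq_nonneg ε]
      linarith
    calc _ ≤ ∑ i, (Real.exp (ε ^ 2 / 64) + ε / 16 * g i) := Finset.sum_le_sum (fun i _ => this i)
      _ = _ := by
        rw [Finset.sum_add_distrib, ← Finset.mul_sum, hs]; simp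
  have hsum : ∑ s : Fin ℓ → Fin n, Real.exp (ε / 16 * ∑ j, g (s j))
      = (∑ i, Real.exp (ε / 16 * g i)) ^ ℓ := by
    rw [Fintype.sum_pow]
    refine Finset.sum_congr rfl (fun s _ => ?_)
    rw [Finset.mul_sum, Real.exp_sum]
  set F := Finset.univ.filter (fun s : Fin ℓ → Fin n => ℓ * (ε / 2) < ∑ j, g (s j)) with hF
  have hmk : (F.card : ℝ) * Real.exp (ℓ * (ε ^ 2 / 32)) ≤
      ∑ s : Fin ℓ → Fin n, Real.exp (ε / 16 * ∑ j, g (s j)) := by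
    calc (F.card : ℝ) * Real.exp (ℓ * (ε ^ 2 / 32))
        = ∑ s ∈ F, Real.exp (ℓ * (ε ^ 2 / 32)) := by simp
      _ ≤ ∑ s ∈ F, Real.exp (ε / 16 * ∑ j, g (s j)) := by
        refine Finset.sum_le_sum (fun s hs' => Real.exp_le_exp.mpr ?_)
        have : ℓ * (ε / 2) < ∑ j, g (s j) := by simpa [hF] using hs'
        nlinarith
      _ ≤ _ := Finset.sum_le_univ_sum_of_nonneg (fun s => (Real.exp_pos _).le)
  have hp : (∑ i, Real.exp (ε / 16 * g i)) ^ ℓ ≤ (n * Real.exp (ε ^ 2 / 64)) ^ ℓ :=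
    pow_le_pow_left₀ (Finset.sum_nonneg (fun i _ => (Real.exp_pos _).le)) hmgf ℓ
  rw [mul_pow, ← Real.exp_nat_mul] at hp
  rw [hsum] at hmk
  have h3 := hmk.trans hp
  have h4 : Real.exp (-(ℓ * ε ^ 2 / 64)) * Real.exp (ℓ * (ε ^ 2 / 32))
      = Real.exp (ℓ * (ε ^ 2 / 64)) := by
    rw [← Real.exp_add]; congr 1; ring
  rw [← h4, ← mul_assoc] at h3
  exact le_of_mul_le_mul_right h3 (Real.exp_pos _)

/-- Sample complexity O(log(m/δ)/ε²) for winner determination under the maximin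
voting rule: if the margin of victory is at least εn with unique winner w and
ℓ ≥ K·ln(m/δ)/ε², then with probability at least 1 - δ over the n^ℓ equiprobable
tuples of ℓ i.i.d. uniform vote samples, the empirical pairwise margins
D̂(x,y) = (n/ℓ)·(pairwise margin on the sample) satisfy |D̂(x,y) - D(x,y)| ≤ εn/2 for
all distinct x, y, and w is the unique maximizer of the empirical maximin score
min_{y ≠ x} D̂(x,y). -/
theorem maximin_sample_complexity :
    ∃ K : ℝ, 0 < K ∧
      ∀ (m n : ℕ) (ε δ : ℝ), 0 < ε → ε < 1 → 0 < δ → δ < 1 →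
      ∀ (V : Fin n → Equiv.Perm (Fin m)) (w : Fin m),
        (∀ x : Fin m, x ≠ w → maximinScore V x < maximinScore V w) →
        (∀ V' : Fin n → Equiv.Perm (Fin m),
          (∃ x : Fin m, x ≠ w ∧ maximinScore V' w ≤ maximinScore V' x) →
          ε * n ≤ (Nat.card {i : Fin n // V' i ≠ V i} : ℝ)) →
        ∀ ℓ : ℕ, K * Real.log ((m : ℝ) / δ) / ε ^ 2 ≤ ℓ →
          (1 - δ) * (n : ℝ) ^ ℓ ≤
            (Nat.card {s : Fin ℓ → Fin n //
              (∀ x y : Fin m, x ≠ y →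
                |(n : ℝ) / ℓ * pairMargin (fun j => V (s j)) x y - pairMargin V x y|
                  ≤ ε * n / 2) ∧
              (∀ x : Fin m, x ≠ w →
                (⨅ y : {y : Fin m // y ≠ x},
                    (n : ℝ) / ℓ * pairMargin (fun j => V (s j)) x (y : Fin m))
                  < ⨅ y : {y : Fin m // y ≠ w},
                    (n : ℝ) / ℓ * pairMargin (fun j => V (s j)) w (y : Fin m))} : ℝ) := by
  refine ⟨128, by norm_num, ?_⟩
  intro m n ε δ hε hε1 hδ hδ1 V w hw hM ℓ hℓ
  classical
  have hm : 1 ≤ m := by have := w.2; omega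
  have hmR : (1 : ℝ) ≤ m := by exact_mod_cast hm
  have hlog : 0 < Real.log ((m : ℝ) / δ) := Real.log_pos (by rw [lt_div_iff₀ hδ]; linarith)
  have hℓ0 : (0 : ℝ) < ℓ := lt_of_lt_of_le (by positivity) hℓ
  have hcomp : 2 * Real.log ((m : ℝ) / δ) ≤ ℓ * ε ^ 2 / 64 := by
    rw [div_le_iff₀ (by positivity)] at hℓ
    linarith
  have hexp : Real.exp (-(ℓ * ε ^ 2 / 64)) ≤ (δ / m) ^ 2 := by
    calc Real.exp (-(ℓ * ε ^ 2 / 64)) ≤ Real.exp (-(2 * Real.log ((m : ℝ) / δ))) :=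
          Real.exp_le_exp.mpr (by linarith)
      _ = (δ / m) ^ 2 := by
        have : -(2 * Real.log ((m : ℝ) / δ)) = (2 : ℕ) * Real.log (δ / m) := by
          rw [← inv_div δ (m : ℝ), Real.log_inv]; push_cast; ring
        rw [this, Real.exp_nat_mul, Real.exp_log (by positivity)]
  -- bad events
  let bad : Fin m × Fin m → Finset (Fin ℓ → Fin n) := fun p => Finset.univ.filter (fun s =>
    ε * n / 2 < (n : ℝ) / ℓ * pairMargin (fun j => V (s j)) p.1 p.2 - pairMargin V p.1 p.2)
  have hbad : ∀ p, ((bad p).card : ℝ) ≤ n ^ ℓ * Real.exp (-(ℓ * ε ^ 2 / 64)) := by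
    rintro ⟨x, y⟩
    rcases Nat.eq_zero_or_pos n with hn | hn
    · subst hn
      have : bad (x, y) = ∅ := by
        apply Finset.filter_eq_empty_iff.mpr
        intro s _
        simp [pairMargin_eq_sum]
      rw [this]; simp; positivity
    have hnR : (0 : ℝ) < n := by exact_mod_cast hn
    have hDs : |pairMargin V x y| ≤ n := by
      rw [pairMargin_eq_sum]
      calc _ ≤ ∑ i, |sg (V i) x y| := Finset.abs_sum_le_sum_abs _ _
        _ ≤ ∑ i : Fin n, (1 : ℝ) := Finset.sum_le_sum (fun i _ =>
            abs_le.mpr ⟨neg_one_le_sg _ _ _, sg_le_one _ _ _⟩)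
        _ = n := by simp
    have hD1 : |pairMargin V x y / n| ≤ 1 := by
      rw [abs_div, abs_of_pos hnR, div_le_one hnR]; exact hDs
    refine le_trans ?_ (chernoff ℓ (fun i => sg (V i) x y - pairMargin V x y / n) ε hε hε1 ?_ ?_)
    · norm_cast
      apply Finset.card_le_card
      intro s hs
      simp only [bad, Finset.mem_filter, Finset.mem_univ, true_and] at hs ⊢
      rw [Finset.sum_sub_distrib, ← pairMargin_eq_sum (fun j => V (s j))]
      simp only [Finset.sum_const, Finset.card_univ, Fintype.card_fin, nsmul_eq_mul]
      generalize pairMargin (fun j => V (s j)) x y = E at hs ⊢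
      generalize pairMargin V x y = D at hs ⊢
      have h2 := mul_lt_mul_of_pos_left hs (div_pos hℓ0 hnR)
      have e1 : (ℓ : ℝ) / n * (ε * n / 2) = ℓ * (ε / 2) := by field_simp
      have e2 : (ℓ : ℝ) / n * ((n : ℝ) / ℓ * E - D) = E - ℓ * (D / n) := by field_simp
      rw [e1, e2] at h2
      exact h2
    · intro i
      have := abs_le.mp hD1
      rw [abs_le]
      constructor <;> linarith [neg_one_le_sg (V i) x y, sg_le_one (V i) x y]
    · rw [Finset.sum_sub_distrib, ← pairMargin_eq_sum]
      simp only [Finset.sum_const, Finset.card_univ, Fintype.card_fin, nsmul_eq_mul]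
      field_simp
      ring
  let Bad := Finset.univ.biUnion bad
  have hBad : (Bad.card : ℝ) ≤ δ * n ^ ℓ := by
    calc (Bad.card : ℝ) ≤ ∑ p, ((bad p).card : ℝ) := by exact_mod_cast Finset.card_biUnion_le
      _ ≤ ∑ p : Fin m × Fin m, (n : ℝ) ^ ℓ * (δ / m) ^ 2 := by
        refine Finset.sum_le_sum (fun p _ => (hbad p).trans ?_)
        gcongr
      _ = δ ^ 2 * n ^ ℓ := by
        simp only [Finset.sum_const, Finset.card_univ, Fintype.card_prod, Fintype.card_fin,
          nsmul_eq_mul]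
        push_cast
        field_simp
      _ ≤ δ * n ^ ℓ := by
        gcongr
        nlinarith
  rw [Nat.card_eq_fintype_card, Fintype.card_subtype]
  have hsub : Badᶜ ⊆ Finset.univ.filter (fun s : Fin ℓ → Fin n =>
      (∀ x y : Fin m, x ≠ y →
                |(n : ℝ) / ℓ * pairMargin (fun j => V (s j)) x y - pairMargin V x y|
                  ≤ ε * n / 2) ∧
              (∀ x : Fin m, x ≠ w →
                (⨅ y : {y : Fin m // y ≠ x},
                    (n : ℝ) / ℓ * pairMargin (fun j => V (s j)) x (y : Fin m))
                  < ⨅ y : {y : Fin m // y ≠ w},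
                    (n : ℝ) / ℓ * pairMargin (fun j => V (s j)) w (y : Fin m))) := by
    intro s hs
    have hs' : ∀ x y : Fin m,
        (n : ℝ) / ℓ * pairMargin (fun j => V (s j)) x y - pairMargin V x y ≤ ε * n / 2 := by
      intro x y
      by_contra hc
      push Not at hc
      apply Finset.mem_compl.mp hs
      exact Finset.mem_biUnion.mpr ⟨(x, y), Finset.mem_univ _, by simpa [bad] using hc⟩
    have habs : ∀ x y : Fin m, x ≠ y →
        |(n : ℝ) / ℓ * pairMargin (fun j => V (s j)) x y - pairMargin V x y| ≤ ε * n / 2 := by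
      intro x y _
      rw [abs_le]
      refine ⟨?_, hs' x y⟩
      have := hs' y x
      rw [pairMargin_swap _ y x, pairMargin_swap V y x] at this
      linarith
    simp only [Finset.mem_filter, Finset.mem_univ, true_and]
    refine ⟨habs, fun x hx => ?_⟩
    have hn : (0 : ℝ) < n := by
      rcases Nat.eq_zero_or_pos n with hn | hn
      · exfalso
        subst hn
        have h := hw x hx
        simp [maximinScore, pairMargin_eq_sum] at h
      · exact_mod_cast hn
    have hgap := gap ε V w hw hM x hx
    obtain ⟨z, hz, hxz⟩ := score_attained V x w hx.symm
    haveI : Nonempty {y : Fin m // y ≠ w} := ⟨⟨x, hx⟩⟩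
    obtain ⟨⟨y, hy⟩, hwy⟩ := exists_eq_ciInf_of_finite
      (f := fun y : {y : Fin m // y ≠ w} =>
        (n : ℝ) / ℓ * pairMargin (fun j => V (s j)) w (y : Fin m))
    rw [← hwy]
    have a1 := ciInf_le (Set.finite_range (fun y : {y : Fin m // y ≠ x} =>
        (n : ℝ) / ℓ * pairMargin (fun j => V (s j)) x (y : Fin m))).bddBelow ⟨z, hz⟩
    refine lt_of_le_of_lt a1 ?_
    have a2 := hs' x z
    have a3 := (abs_le.mp (habs w y hy.symm)).1
    have a4 := score_le V w y hy
    have a5 : 0 < ε * n := mul_pos hε hn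
    simp only
    linarith
  have hcard := Finset.card_le_card hsub
  rw [Finset.card_compl, Fintype.card_fun, Fintype.card_fin, Fintype.card_fin] at hcard
  have hcard2 : ((n ^ ℓ : ℕ) : ℝ) - Bad.card ≤ ((n ^ ℓ - Bad.card : ℕ) : ℝ) := by
    rw [sub_le_iff_le_add]
    norm_cast
    omega
  have hcard3 := hcard2.trans (Nat.cast_le.mpr hcard)
  push_cast at hcard3
  refine le_trans ?_ hcard3
  linarith
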